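/- Let L be a g-symmetric nilpotent endomorphism of V. Then there exist a basis of V, positive integers n₁ ≤ n₂ ≤ ... ≤ n_k with n₁ + ... + n_k = dim V, and signs ε₁, ..., ε_k ∈ {1, −1}, such that in this basis the matrix of L is the block-diagonal matrix diag(J_{n₁}, ..., J_{n_k}) and the matrix of g is the block-diagonal matrix diag(ε₁S_{n₁}, ..., ε_k S_{n_k}). -/

import Mathlib

theorem aux_pow_symm {V : Type*} [AddCommGroup V] [Module ℝ V]
    (g : LinearMap.BilinForm ℝ V) (L : Module.End ℝ V)
    (hL : ∀ u v : V, g (L u) v = g u (L v)) (a : ℕ) :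
    ∀ u v : V, g ((L ^ a) u) v = g u ((L ^ a) v) := by
  induction a with
  | zero => intro u v; simp
  | succ a ih =>
    intro u v
    rw [pow_succ, Module.End.mul_apply, ih, hL, ← Module.End.mul_apply, ← pow_succ', pow_succ]

theorem aux_pow_add {V : Type*} [AddCommGroup V] [Module ℝ V]
    (g : LinearMap.BilinForm ℝ V) (L : Module.End ℝ V)
    (hL : ∀ u v : V, g (L u) v = g u (L v)) (a b : ℕ) (u v : V) :
    g ((L ^ a) u) ((L ^ b) v) = g ((L ^ (a + b)) u) v := by
  rw [← aux_pow_symm g L hL b, ← Module.End.mul_apply, ← pow_add, add_comm]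

theorem aux_pow_mem {V : Type*} [AddCommGroup V] [Module ℝ V] (L : Module.End ℝ V)
    (W : Submodule ℝ V) (hW : ∀ w ∈ W, L w ∈ W) (a : ℕ) : ∀ w ∈ W, (L ^ a) w ∈ W := by
  induction a with
  | zero => intro w hw; simpa using hw
  | succ a ih => intro w hw; rw [pow_succ, Module.End.mul_apply]; exact ih _ (hW _ hw)

/-- A cyclic vector with normalized products. -/
theorem aux_vector {V : Type*} [AddCommGroup V] [Module ℝ V]
    (g : LinearMap.BilinForm ℝ V) (hg_symm : ∀ u v : V, g u v = g v u)
    (L : Module.End ℝ V) (hL : ∀ u v : V, g (L u) v = g u (L v)) (hnil : IsNilpotent L)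
    (W : Submodule ℝ V) (hW : ∀ w ∈ W, L w ∈ W)
    (hnd : ∀ m ∈ W, (∀ n ∈ W, g m n = 0) → m = 0) (hne : W ≠ ⊥) :
    ∃ (M : ℕ) (e : ℝ) (x : V), x ∈ W ∧ (e = 1 ∨ e = -1) ∧ (L ^ (M + 1)) x = 0 ∧
      ∀ a, g ((L ^ a) x) x = if a = M then e else 0 := by
  classical
  have hex : ∃ N, ∀ w ∈ W, (L ^ N) w = 0 := by
    obtain ⟨N, hN⟩ := hnil
    exact ⟨N, fun w _ => by rw [hN]; rfl⟩
  obtain ⟨M, hM, w, hw, hMw⟩ : ∃ M, (∀ w ∈ W, (L ^ (M + 1)) w = 0) ∧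
      ∃ w ∈ W, (L ^ M) w ≠ 0 := by
    have h0 : Nat.find hex ≠ 0 := by
      intro h
      apply hne
      rw [Submodule.eq_bot_iff]
      have := Nat.find_spec hex
      rw [h] at this
      simpa using this
    obtain ⟨M, hM⟩ := Nat.exists_eq_succ_of_ne_zero h0
    refine ⟨M, ?_, ?_⟩
    · have := Nat.find_spec hex
      rwa [hM] at this
    · have := Nat.find_min hex (m := M) (by omega)
      push Not at this
      exact this
  have hzero : ∀ a, M < a → ∀ w ∈ W, (L ^ a) w = 0 := by
    intro a ha w hw
    obtain ⟨c, rfl⟩ := Nat.exists_eq_add_of_lt ha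
    rw [show M + c + 1 = c + (M + 1) by ring, pow_add, Module.End.mul_apply, hM w hw, map_zero]
  obtain ⟨v, hv, hwv⟩ : ∃ v ∈ W, g ((L ^ M) w) v ≠ 0 := by
    by_contra! h
    exact hMw (hnd _ (aux_pow_mem L W hW M w hw) h)
  obtain ⟨x, hx, hxx⟩ : ∃ x ∈ W, g ((L ^ M) x) x ≠ 0 := by
    by_contra! h
    have h1 := h w hw
    have h2 := h v hv
    have h3 := h (w + v) (W.add_mem hw hv)
    have h4 : g ((L ^ M) v) w = g ((L ^ M) w) v := by
      rw [aux_pow_symm g L hL, hg_symm]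
    simp only [map_add, LinearMap.add_apply] at h3
    apply hwv
    linarith
  obtain ⟨e, he, x, hx, hxx⟩ : ∃ e : ℝ, (e = 1 ∨ e = -1) ∧ ∃ x ∈ W, g ((L ^ M) x) x = e := by
    set r := g ((L ^ M) x) x with hr
    have hs : (Real.sqrt |r|) * (Real.sqrt |r|) = |r| := Real.mul_self_sqrt (abs_nonneg r)
    have hs0 : Real.sqrt |r| ≠ 0 := by
      rw [Real.sqrt_ne_zero']; exact abs_pos.mpr hxx
    refine ⟨r / |r|, ?_, (Real.sqrt |r|)⁻¹ • x, W.smul_mem _ hx, ?_⟩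
    · rcases abs_cases r with h | h
      · left; rw [h.1]; exact div_self hxx
      · right; rw [h.1]; field_simp
    · simp only [map_smul, LinearMap.smul_apply, smul_eq_mul, ← hr]
      rw [div_eq_mul_inv, show |r|⁻¹ = (Real.sqrt |r|)⁻¹ * (Real.sqrt |r|)⁻¹ by
        rw [← mul_inv, hs]]
      ring
  have he0 : e ≠ 0 := by rcases he with h | h <;> rw [h] <;> norm_num
  have key : ∀ j, j ≤ M → ∃ x ∈ W, g ((L ^ M) x) x = e ∧
      ∀ a, a < M → M ≤ a + j → g ((L ^ a) x) x = 0 := by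
    intro j
    induction j with
    | zero => exact fun _ => ⟨x, hx, hxx, fun a h1 h2 => by omega⟩
    | succ j ih =>
      intro hj
      obtain ⟨y, hy, hyy, hya⟩ := ih (by omega)
      set c : ℝ := - g ((L ^ (M - (j + 1))) y) y / (2 * e) with hc
      have hz : ∀ a, M < a → g ((L ^ a) y) y = 0 := by
        intro a ha
        rw [hzero a ha y hy]; simp
      have hexp : ∀ a, g ((L ^ a) (y + c • (L ^ (j + 1)) y)) (y + c • (L ^ (j + 1)) y) =
          g ((L ^ a) y) y + 2 * c * g ((L ^ (a + (j + 1))) y) y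
            + c * c * g ((L ^ (a + (j + 1) + (j + 1))) y) y := by
        intro a
        simp only [map_add, map_smul, LinearMap.add_apply, LinearMap.smul_apply, smul_eq_mul]
        rw [← Module.End.mul_apply, ← pow_add, aux_pow_add g L hL, aux_pow_add g L hL]
        ring
      refine ⟨y + c • (L ^ (j + 1)) y,
        W.add_mem hy (W.smul_mem _ (aux_pow_mem L W hW _ y hy)), ?_, ?_⟩
      · rw [hexp, hyy, hz _ (by omega), hz _ (by omega)]; ring
      · intro a ha hja
        rw [hexp, hz (a + (j + 1) + (j + 1)) (by omega)]
        by_cases h : M ≤ a + j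
        · rw [hya a ha h, hz _ (by omega)]; ring
        · have h1 : a + (j + 1) = M := by omega
          have h2 : M - (j + 1) = a := by omega
          rw [h1, hyy, hc, h2]
          field_simp
          ring
  obtain ⟨x, hx, hxx, hxa⟩ := key M le_rfl
  refine ⟨M, e, x, hx, he, hM x hx, fun a => ?_⟩
  split_ifs with h
  · rw [h, hxx]
  · rcases Nat.lt_or_ge a M with h1 | h1
    · exact hxa a h1 (by omega)
    · rw [hzero a (by omega) x hx]; simp

theorem aux_family {V : Type*} [AddCommGroup V] [Module ℝ V] [FiniteDimensional ℝ V]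
    (g : LinearMap.BilinForm ℝ V) (hg_symm : ∀ u v : V, g u v = g v u)
    (L : Module.End ℝ V) (hL : ∀ u v : V, g (L u) v = g u (L v)) (hnil : IsNilpotent L)
    (W : Submodule ℝ V) : (∀ w ∈ W, L w ∈ W) →
    (∀ m ∈ W, (∀ n ∈ W, g m n = 0) → m = 0) →
    ∃ (k : ℕ) (n : Fin k → ℕ) (ε : Fin k → ℝ) (u : Fin k → V),
      (∀ i, u i ∈ W) ∧ (∀ i, 0 < n i) ∧ (∀ i, ε i = 1 ∨ ε i = -1) ∧
      (∀ i, (L ^ (n i)) (u i) = 0) ∧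
      (∀ i j a, g ((L ^ a) (u i)) (u j) = if i = j ∧ a + 1 = n i then ε i else 0) ∧
      ∀ S : Submodule ℝ V, (∀ i a, (L ^ a) (u i) ∈ S) → W ≤ S := by
  induction W using WellFoundedLT.induction with
  | ind W ih =>
  intro hW hnd
  by_cases hne : W = ⊥
  · refine ⟨0, Fin.elim0, Fin.elim0, Fin.elim0, fun i => i.elim0, fun i => i.elim0,
      fun i => i.elim0, fun i => i.elim0, fun i => i.elim0, fun S _ => ?_⟩
    rw [hne]; exact bot_le
  obtain ⟨M, e, x, hx, he, hMx, hxx⟩ := aux_vector g hg_symm L hL hnil W hW hnd hne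
  have he2 : e * e = 1 := by rcases he with h | h <;> rw [h] <;> norm_num
  let W' : Submodule ℝ V :=
    { carrier := {w | w ∈ W ∧ ∀ a, g ((L ^ a) x) w = 0}
      add_mem' := fun {p q} hp hq => ⟨W.add_mem hp.1 hq.1, fun a => by
        rw [map_add, hp.2, hq.2, add_zero]⟩
      zero_mem' := ⟨W.zero_mem, fun a => by simp⟩
      smul_mem' := fun c p hp => ⟨W.smul_mem c hp.1, fun a => by
        rw [map_smul, hp.2, smul_zero]⟩ }
  have hmem : ∀ w, w ∈ W' ↔ w ∈ W ∧ ∀ a, g ((L ^ a) x) w = 0 := fun w => Iff.rfl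
  have hlt : W' < W := by
    refine lt_of_le_of_ne (fun w hw => hw.1) ?_
    intro h
    have h1 : x ∈ W' := h ▸ hx
    have h2 := h1.2 M
    rw [hxx, if_pos rfl] at h2
    rw [h2] at he2
    norm_num at he2
  have hW' : ∀ w ∈ W', L w ∈ W' := by
    intro w hw
    refine ⟨hW _ hw.1, fun a => ?_⟩
    rw [← hL, ← Module.End.mul_apply, ← pow_succ', hw.2]
  have hdec : ∀ w ∈ W, w - ∑ a ∈ Finset.range (M + 1),
      (e * g ((L ^ (M - a)) x) w) • (L ^ a) x ∈ W' := by
    intro w hw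
    refine ⟨W.sub_mem hw (W.sum_mem fun a _ => W.smul_mem _ (aux_pow_mem L W hW a x hx)), ?_⟩
    intro b
    rw [map_sub, map_sum]
    simp only [map_smul, smul_eq_mul, aux_pow_add g L hL, hxx]
    by_cases hb : b ≤ M
    · rw [Finset.sum_eq_single (M - b)]
      · rw [if_pos (by omega), show M - (M - b) = b by omega]
        linear_combination (- g ((L ^ b) x) w) * he2
      · intro a ha hab
        rw [Finset.mem_range] at ha
        rw [if_neg (by omega), mul_zero]
      · intro h
        rw [Finset.mem_range] at h
        omega
    · rw [Finset.sum_eq_zero]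
      · obtain ⟨c, rfl⟩ : ∃ c, b = c + (M + 1) := ⟨b - (M + 1), by omega⟩
        rw [pow_add, Module.End.mul_apply, hMx]; simp
      · intro a ha
        rw [if_neg (by omega), mul_zero]
  have hnd' : ∀ m ∈ W', (∀ n ∈ W', g m n = 0) → m = 0 := by
    intro m hm h
    refine hnd m hm.1 fun w hw => ?_
    have h1 := h _ (hdec w hw)
    rw [map_sub, map_sum, Finset.sum_eq_zero, sub_zero] at h1
    · exact h1
    · intro a _
      rw [map_smul, hg_symm m, hm.2, smul_zero]
  obtain ⟨k, n, ε, u, hu, hn, hε, hnu, hgu, hsp⟩ := ih W' hlt hW' hnd'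
  refine ⟨k + 1, Fin.cons (M + 1) n, Fin.cons e ε, Fin.cons x u, ?_, ?_, ?_, ?_, ?_, ?_⟩
  · intro i
    refine Fin.cases ?_ (fun i => ?_) i
    · simpa using hx
    · simpa using (hu i).1
  · intro i
    refine Fin.cases ?_ (fun i => ?_) i
    · simp
    · simpa using hn i
  · intro i
    refine Fin.cases ?_ (fun i => ?_) i
    · simpa using he
    · simpa using hε i
  · intro i
    refine Fin.cases ?_ (fun i => ?_) i
    · simpa using hMx
    · simpa using hnu i
  · intro i j a
    refine Fin.cases ?_ (fun i => ?_) i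
    · refine Fin.cases ?_ (fun j => ?_) j
      · simpa using hxx a
      · simpa [(Fin.succ_ne_zero j).symm] using (hu j).2 a
    · refine Fin.cases ?_ (fun j => ?_) j
      · rw [aux_pow_symm g L hL, hg_symm]
        simpa using (hu i).2 a
      · simpa using hgu i j a
  · intro S hS w hw
    have h1 : W' ≤ S := hsp S fun i a => by simpa using hS i.succ a
    have h2 := h1 (hdec w hw)
    have h3 : ∑ a ∈ Finset.range (M + 1), (e * g ((L ^ (M - a)) x) w) • (L ^ a) x ∈ S :=
      S.sum_mem fun a _ => S.smul_mem _ (by simpa using hS 0 a)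
    simpa using S.add_mem h2 h3

/-- If `L` is a `g`-symmetric nilpotent endomorphism of `V`, then there
exist a basis of `V` indexed by `Σ i : Fin k, Fin (n i)` with `n₁ ≤ ... ≤ n_k` positive
and `n₁ + ... + n_k = dim V`, and signs `ε i ∈ {1, -1}`, such that in this basis the
matrix of `L` is `diag(J_{n₁}, ..., J_{n_k})` (blockwise nilpotent Jordan blocks:
entry `1` at positions `(a, a+1)` inside each block) and the matrix of `g` is
`diag(ε₁ S_{n₁}, ..., ε_k S_{n_k})` (blockwise antidiagonal: entry `ε i` at positions
`(a, b)` with `a + b + 1 = n i` inside block `i`). -/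
theorem stmt9 (V : Type*) [AddCommGroup V] [Module ℝ V] [FiniteDimensional ℝ V]
    (g : LinearMap.BilinForm ℝ V) (hg_symm : ∀ u v : V, g u v = g v u)
    (hg_nd : ∀ m : V, (∀ n : V, g m n = 0) → m = 0)
    (L : Module.End ℝ V)
    (hL : ∀ u v : V, g (L u) v = g u (L v))
    (hnil : IsNilpotent L) :
    ∃ (k : ℕ) (n : Fin k → ℕ) (ε : Fin k → ℝ)
      (b : Module.Basis ((i : Fin k) × Fin (n i)) ℝ V),
      (∀ i, 0 < n i) ∧ Monotone n ∧ (∀ i, ε i = 1 ∨ ε i = -1) ∧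
      (∑ i, n i = Module.finrank ℝ V) ∧
      (∀ p q : (i : Fin k) × Fin (n i),
        LinearMap.toMatrix b b L p q =
          if p.1 = q.1 ∧ (q.2 : ℕ) = (p.2 : ℕ) + 1 then 1 else 0) ∧
      (∀ p q : (i : Fin k) × Fin (n i),
        g (b p) (b q) =
          if p.1 = q.1 ∧ (p.2 : ℕ) + (q.2 : ℕ) + 1 = n p.1 then ε p.1 else 0) := by
  classical
  obtain ⟨k, n, ε, u, hn, hmono, hε, hnu, hgu, hsp⟩ :
      ∃ (k : ℕ) (n : Fin k → ℕ) (ε : Fin k → ℝ) (u : Fin k → V),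
      (∀ i, 0 < n i) ∧ Monotone n ∧ (∀ i, ε i = 1 ∨ ε i = -1) ∧
      (∀ i, (L ^ (n i)) (u i) = 0) ∧
      (∀ i j a, g ((L ^ a) (u i)) (u j) = if i = j ∧ a + 1 = n i then ε i else 0) ∧
      ∀ S : Submodule ℝ V, (∀ i a, (L ^ a) (u i) ∈ S) → ⊤ ≤ S := by
    obtain ⟨k, n, ε, u, -, hn, hε, hnu, hgu, hsp⟩ := aux_family g hg_symm L hL hnil ⊤
      (fun _ _ => trivial) (fun m _ h => hg_nd m fun n => h n trivial)
    refine ⟨k, n ∘ Tuple.sort n, ε ∘ Tuple.sort n, u ∘ Tuple.sort n, fun i => hn _,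
      Tuple.monotone_sort n, fun i => hε _, fun i => hnu _, fun i j a => ?_, fun S hS => ?_⟩
    · simpa using hgu (Tuple.sort n i) (Tuple.sort n j) a
    · refine hsp S fun i a => ?_
      simpa using hS ((Tuple.sort n).symm i) a
  let f : ((i : Fin k) × Fin (n i)) → V := fun p => (L ^ (n p.1 - 1 - (p.2 : ℕ))) (u p.1)
  have hgf : ∀ p q, g (f p) (f q) =
      if p.1 = q.1 ∧ (p.2 : ℕ) + (q.2 : ℕ) + 1 = n p.1 then ε p.1 else 0 := by
    rintro ⟨i, a⟩ ⟨j, b⟩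
    simp only [f]
    rw [aux_pow_add g L hL, hgu]
    by_cases hij : i = j
    · subst hij
      have ha := a.2
      have hb := b.2
      congr 1
      simp only [true_and, eq_iff_iff]
      omega
    · simp [hij]
  have hli : LinearIndependent ℝ f := by
    rw [Fintype.linearIndependent_iff]
    rintro c hc ⟨i, a⟩
    have ha := a.2
    have h1 : g (∑ p, c p • f p) (f ⟨i, ⟨n i - 1 - a, by omega⟩⟩) = 0 := by rw [hc]; simp
    rw [map_sum, LinearMap.sum_apply, Finset.sum_eq_single ⟨i, a⟩] at h1
    · rw [map_smul, LinearMap.smul_apply, hgf, if_pos ⟨rfl, by simp only; omega⟩] at h1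
      rcases hε i with h | h <;> simpa [h] using h1
    · rintro ⟨j, b⟩ - hne
      rw [map_smul, LinearMap.smul_apply, hgf, if_neg, smul_zero]
      rintro ⟨h2, h3⟩
      simp only at h2 h3
      subst h2
      apply hne
      congr 1
      apply Fin.ext
      omega
    · intro h; exact absurd (Finset.mem_univ _) h
  have hspan : ⊤ ≤ Submodule.span ℝ (Set.range f) := by
    refine hsp _ fun i a => ?_
    by_cases h : a < n i
    · refine Submodule.subset_span ⟨⟨i, ⟨n i - 1 - a, by omega⟩⟩, ?_⟩
      simp only [f]
      rw [show n i - 1 - (n i - 1 - a) = a by omega]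
    · obtain ⟨c, rfl⟩ : ∃ c, a = c + n i := ⟨a - n i, by omega⟩
      rw [pow_add, Module.End.mul_apply, hnu, map_zero]
      exact Submodule.zero_mem _
  let b := Module.Basis.mk hli hspan
  have hb : ∀ p, b p = f p := fun p => by simp [b]
  refine ⟨k, n, ε, b, hn, hmono, hε, ?_, ?_, ?_⟩
  · rw [Module.finrank_eq_card_basis b]; simp
  · rintro ⟨i, a⟩ ⟨j, c⟩
    rw [LinearMap.toMatrix_apply, hb]
    have hc := c.2
    by_cases h0 : (c : ℕ) = 0
    · have : L (f ⟨j, c⟩) = 0 := by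
        simp only [f]
        rw [← Module.End.mul_apply, ← pow_succ', h0,
          show n j - 1 - 0 + 1 = n j by omega, hnu]
      rw [this, if_neg (by simp only; omega)]
      simp
    · have : L (f ⟨j, c⟩) = b ⟨j, ⟨c - 1, by omega⟩⟩ := by
        rw [hb]
        simp only [f]
        rw [← Module.End.mul_apply, ← pow_succ',
          show n j - 1 - (c : ℕ) + 1 = n j - 1 - ((c : ℕ) - 1) by omega]
      rw [this, b.repr_self, Finsupp.single_apply]
      congr 1
      rw [eq_iff_iff]
      constructor
      · intro h
        obtain ⟨rfl, h⟩ := Sigma.mk.inj_iff.mp h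
        rw [heq_iff_eq] at h
        refine ⟨rfl, ?_⟩
        rw [← h]; simp only; omega
      · rintro ⟨h1, h2⟩
        simp only at h1 h2
        subst h1
        congr 1
        apply Fin.ext
        simp only
        omega
  · intro p q
    rw [hb, hb, hgf]
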